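/- The Robin-boundary solution p = p₁ + p₂ + p₃ satisfies the Dirac delta initial condition at x₀: for every bounded continuous function f : ℝ → ℝ, the integral ∫_{−∞}^{L} f(x) · p(x, t) dx converges to f(x₀) as t → 0⁺. -/

import Mathlib

/-!
The kernel `U(·, t, a)` is a Gaussian of mean `a + νt` and variance `2Dt`, so integrating a bounded
function `g`, continuous at `a`, against it gives `g a` in the limit `t → 0⁺`
(`tendsto_integral_mul_U`: rescale to the standard Gaussian and use dominated convergence).
Taking `g = 1_{(-∞, L]} f`, the term `p₁` contributes `g x₀ = f x₀` and `p₂` contributes a multiple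
of `g (2L - x₀) = 0`, because `2L - x₀ > L`.

For `p₃`, put `d = L - x₀ > 0`. When `x ≤ L`, `η ≥ 2L - x₀` and `t` is small, the exponent of
`U(x, t, η)` is large enough to absorb `e^{(α/β)(η - 2L + x₀)}` and to leave the bound
`C(t) e^{-(η - 2L + x₀)} e^{-(L - x)}` with `C(t) = (4πDt)^{-1/2} e^{-d²/(16Dt)} → 0`
(`exp_mul_U_le`, `tendsto_smallBound`); the double integral is then at most `sup |f| · C(t)`.
-/

open Real MeasureTheory

/-- The free advection–diffusion kernel `U(x, t, η)`. -/
noncomputable def U (D ν : ℝ) (x t η : ℝ) : ℝ :=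
  (1 / Real.sqrt (4 * Real.pi * D * t)) * Real.exp (-(x - η - ν * t) ^ 2 / (4 * D * t))

/-- First term of the Robin-boundary solution: `p₁(x, t) = U(x, t, x₀)`. -/
noncomputable def p1 (D ν x₀ : ℝ) (x t : ℝ) : ℝ := U D ν x t x₀

/-- Second term: `p₂(x, t) = e^{(ν/D)(L − x₀)} U(x, t, 2L − x₀)`. -/
noncomputable def p2 (D ν L x₀ : ℝ) (x t : ℝ) : ℝ :=
  Real.exp ((ν / D) * (L - x₀)) * U D ν x t (2 * L - x₀)

/-- Third term:
`p₃(x, t) = 2(α/β + ν/(2D)) e^{(ν/D)(L − x₀)} ∫_{2L − x₀}^{∞} e^{(α/β)(η − (2L − x₀))} U(x, t, η) dη`. -/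
noncomputable def p3 (D ν L x₀ α β : ℝ) (x t : ℝ) : ℝ :=
  2 * (α / β + ν / (2 * D)) * Real.exp ((ν / D) * (L - x₀)) *
    ∫ η in Set.Ici (2 * L - x₀), Real.exp ((α / β) * (η - (2 * L - x₀))) * U D ν x t η

/-- The Robin-boundary solution `p = p₁ + p₂ + p₃`. -/
noncomputable def pRobin (D ν L x₀ α β : ℝ) (x t : ℝ) : ℝ :=
  p1 D ν x₀ x t + p2 D ν L x₀ x t + p3 D ν L x₀ α β x t

open Filter Topology

lemma U_nonneg (D ν x t η : ℝ) : 0 ≤ U D ν x t η := by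
  unfold U; positivity

lemma integral_mul_U_eq {D : ℝ} (hD : 0 < D) (ν a : ℝ) (g : ℝ → ℝ) {t : ℝ} (ht : 0 < t) :
    ∫ x, g x * U D ν x t a =
      ∫ z, g (√(4 * D * t) * z + (a + ν * t)) * ((1 / √π) * Real.exp (-z ^ 2)) := by
  have hc : 0 < √(4 * D * t) := by positivity
  have hsq : √(4 * D * t) ^ 2 = 4 * D * t := Real.sq_sqrt (by positivity)
  have hsplit : √(4 * π * D * t) = √π * √(4 * D * t) := by
    rw [← Real.sqrt_mul Real.pi_pos.le]; congr 1; ring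
  have hpi : 0 < √π := by positivity
  rw [← integral_add_right_eq_self (fun x => g x * U D ν x t a) (a + ν * t)]
  have h := Measure.integral_comp_mul_left
    (fun x => g (x + (a + ν * t)) * U D ν (x + (a + ν * t)) t a) (√(4 * D * t))
  rw [abs_of_pos (inv_pos.2 hc), smul_eq_mul, eq_inv_mul_iff_mul_eq₀ hc.ne',
    ← integral_const_mul] at h
  rw [← h]
  congr 1
  ext z
  have e : -(√(4 * D * t) * z + (a + ν * t) - a - ν * t) ^ 2 / (4 * D * t) = -z ^ 2 := by
    have : (√(4 * D * t) * z + (a + ν * t) - a - ν * t) ^ 2 = (4 * D * t) * z ^ 2 := by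
      linear_combination z ^ 2 * hsq
    rw [this]
    field_simp
  unfold U
  rw [e, hsplit]
  field_simp

lemma integrable_std_gaussian : Integrable fun z : ℝ => (1 / √π) * Real.exp (-z ^ 2) := by
  have := (integrable_exp_neg_mul_sq (b := 1) one_pos).const_mul (1 / √π)
  simpa using this

lemma integral_std_gaussian : ∫ z : ℝ, (1 / √π) * Real.exp (-z ^ 2) = 1 := by
  have h := integral_gaussian 1
  simp only [neg_mul, one_mul, div_one] at h
  rw [integral_const_mul, h]
  have hpi : 0 < √π := by positivity
  field_simp

/-- `U(·, t, a)` is an approximate identity at `a`; only continuity at `a` is needed, so that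
truncations of continuous functions are covered. -/
lemma tendsto_integral_mul_U {D : ℝ} (hD : 0 < D) (ν a : ℝ) {g : ℝ → ℝ} (hg : Measurable g)
    {M : ℝ} (hM : ∀ x, |g x| ≤ M) (hga : ContinuousAt g a) :
    Tendsto (fun t => ∫ x, g x * U D ν x t a) (𝓝[>] 0) (𝓝 (g a)) := by
  have key : Tendsto (fun t : ℝ => ∫ z, g (√(4 * D * t) * z + (a + ν * t)) *
      ((1 / √π) * Real.exp (-z ^ 2))) (𝓝[>] 0) (𝓝 (∫ z, g a * ((1 / √π) * Real.exp (-z ^ 2)))) := by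
    refine tendsto_integral_filter_of_dominated_convergence
      (fun z => M * ((1 / √π) * Real.exp (-z ^ 2))) ?_ ?_ ?_ ?_
    · exact Eventually.of_forall fun t => Measurable.aestronglyMeasurable (by fun_prop)
    · refine Eventually.of_forall fun t => Eventually.of_forall fun z => ?_
      rw [norm_mul, Real.norm_eq_abs, Real.norm_of_nonneg (by positivity : 0 ≤ 1 / √π * rexp (-z ^ 2))]
      gcongr
      exact hM _
    · exact integrable_std_gaussian.const_mul M
    · refine Eventually.of_forall fun z => ?_
      refine Tendsto.mul_const _ (hga.tendsto.comp ?_)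
      have hcont : Continuous fun t : ℝ => √(4 * D * t) * z + (a + ν * t) := by fun_prop
      have := hcont.tendsto 0
      simp only [mul_zero, Real.sqrt_zero, zero_mul, add_zero, zero_add] at this
      exact this.mono_left nhdsWithin_le_nhds
  rw [integral_const_mul, integral_std_gaussian, mul_one] at key
  refine key.congr' ?_
  filter_upwards [self_mem_nhdsWithin] with t ht
  exact (integral_mul_U_eq hD ν a g ht).symm

lemma integrable_U {D : ℝ} (hD : 0 < D) (ν a : ℝ) {t : ℝ} (ht : 0 < t) :
    Integrable fun x => U D ν x t a := by
  have hb : 0 < 1 / (4 * D * t) := by positivity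
  have h := ((integrable_exp_neg_mul_sq hb).comp_sub_right (a + ν * t)).const_mul
    (1 / √(4 * π * D * t))
  refine h.congr (Eventually.of_forall fun x => ?_)
  simp only [U]
  congr 2
  ring

/-- The `t`-dependent factor in the bound on `p₃`, with `d` the distance from `x₀` to `L`. -/
noncomputable def smallBound (D d t : ℝ) : ℝ :=
  (1 / √(4 * π * D * t)) * Real.exp (-(d ^ 2 / (16 * D * t)))

lemma tendsto_smallBound {D d : ℝ} (hD : 0 < D) (hd : 0 < d) :
    Tendsto (smallBound D d) (𝓝[>] 0) (𝓝 0) := by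
  have h1 := (tendsto_rpow_mul_exp_neg_mul_atTop_nhds_zero (1 / 2) (d ^ 2 / (16 * D))
    (by positivity)).comp (tendsto_inv_nhdsGT_zero (𝕜 := ℝ))
  have h2 := h1.const_mul (1 / √(4 * π * D))
  rw [mul_zero] at h2
  refine h2.congr' ?_
  filter_upwards [self_mem_nhdsWithin] with t ht
  have ht : 0 < t := ht
  simp only [Function.comp, smallBound]
  rw [← Real.sqrt_eq_rpow, Real.sqrt_inv, Real.sqrt_mul (by positivity) t]
  have : -(d ^ 2 / (16 * D)) * t⁻¹ = -(d ^ 2 / (16 * D * t)) := by field_simp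
  rw [this]
  have : 0 < √t := by positivity
  have : 0 < √(4 * π * D) := by positivity
  field_simp

/-- Far from the diagonal and for small `t`, the Gaussian decay of `U` beats the exponential weight.
In terms of `s = η - (2L - x₀) ≥ 0` and `y = L - x ≥ 0`, the exponent satisfies
`(d + s + y + νt)² ≥ (d/2 + s + y)² ≥ d²/4 + d (s + y)` once `|νt| ≤ d/2`. -/
lemma exp_mul_U_le {D ν L x₀ k x t η : ℝ} (hD : 0 < D) (hd : 0 < L - x₀) (ht : 0 < t)
    (hνt : |ν * t| ≤ (L - x₀) / 2) (hkt : (|k| + 1) * (4 * D * t) ≤ L - x₀)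
    (hx : x ≤ L) (hη : 2 * L - x₀ ≤ η) :
    Real.exp (k * (η - (2 * L - x₀))) * U D ν x t η ≤
      smallBound D (L - x₀) t * Real.exp (-(L - x)) * Real.exp (-(η - (2 * L - x₀))) := by
  obtain ⟨d, hdd⟩ : ∃ d, d = L - x₀ := ⟨_, rfl⟩
  obtain ⟨s, hs⟩ : ∃ s, s = η - (2 * L - x₀) := ⟨_, rfl⟩
  obtain ⟨y, hy⟩ : ∃ y, y = L - x := ⟨_, rfl⟩
  have hs0 : 0 ≤ s := by linarith
  have hy0 : 0 ≤ y := by linarith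
  have e : x - η - ν * t = -(d + s + y + ν * t) := by rw [hdd, hs, hy]; ring
  unfold U smallBound
  rw [e, ← hs, ← hy, ← hdd]
  rw [← hdd] at hd hνt hkt
  have hν := (abs_le.1 hνt).1
  have hsq : d ^ 2 / 4 + d * (s + y) ≤ (d + s + y + ν * t) ^ 2 := by
    have h1 : (d / 2 + s + y) ^ 2 ≤ (d + s + y + ν * t) ^ 2 := by
      apply pow_le_pow_left₀ (by positivity); linarith
    nlinarith [sq_nonneg (s + y)]
  have h4 : 0 < 4 * D * t := by positivity
  have hks : k * s ≤ |k| * s := mul_le_mul_of_nonneg_right (le_abs_self k) hs0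
  have hky : 0 ≤ |k| * y := by positivity
  have hexp : k * s + -(-(d + s + y + ν * t)) ^ 2 / (4 * D * t) ≤
      -(d ^ 2 / (16 * D * t)) + -y + -s := by
    have h1 : d ^ 2 / (16 * D * t) + (|k| + 1) * (s + y) ≤
        (-(d + s + y + ν * t)) ^ 2 / (4 * D * t) := by
      rw [le_div_iff₀ h4, neg_sq]
      have h2 : d ^ 2 / (16 * D * t) * (4 * D * t) = d ^ 2 / 4 := by field_simp; norm_num
      have h3 := mul_le_mul_of_nonneg_right hkt (add_nonneg hs0 hy0)
      nlinarith
    rw [neg_div]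
    nlinarith
  have := Real.exp_le_exp.2 hexp
  rw [Real.exp_add, Real.exp_add, Real.exp_add] at this
  have hp : 0 ≤ 1 / √(4 * π * D * t) := by positivity
  nlinarith [mul_le_mul_of_nonneg_left this hp]

lemma integrableOn_exp_neg_sub_Ici (c : ℝ) :
    IntegrableOn (fun η : ℝ => Real.exp (-(η - c))) (Set.Ici c) := by
  rw [integrableOn_Ici_iff_integrableOn_Ioi]
  have := (integrableOn_exp_neg_Ioi c).const_mul (Real.exp c)
  refine this.congr (Eventually.of_forall fun η => ?_)
  simp only [← Real.exp_add]
  congr 1; ring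

lemma integral_exp_neg_sub_Ici (c : ℝ) :
    ∫ η in Set.Ici c, Real.exp (-(η - c)) = 1 := by
  rw [integral_Ici_eq_integral_Ioi]
  have h : (fun η : ℝ => Real.exp (-(η - c))) = fun η => Real.exp c * Real.exp (-η) := by
    ext η; rw [← Real.exp_add]; congr 1; ring
  rw [h, integral_const_mul, integral_exp_neg_Ioi, ← Real.exp_add]
  simp

lemma integrableOn_exp_neg_sub_Iic (c : ℝ) :
    IntegrableOn (fun x : ℝ => Real.exp (-(c - x))) (Set.Iic c) := by
  have := (integrableOn_exp_Iic c).const_mul (Real.exp (-c))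
  refine this.congr (Eventually.of_forall fun η => ?_)
  simp only [← Real.exp_add]
  congr 1; ring

lemma integral_exp_neg_sub_Iic (c : ℝ) :
    ∫ x in Set.Iic c, Real.exp (-(c - x)) = 1 := by
  have h : (fun x : ℝ => Real.exp (-(c - x))) = fun x => Real.exp (-c) * Real.exp x := by
    ext η; rw [← Real.exp_add]; congr 1; ring
  rw [h, integral_const_mul, integral_exp_Iic, ← Real.exp_add]
  simp

lemma measurable_p3 (D ν L x₀ α β t : ℝ) : Measurable fun x => p3 D ν L x₀ α β x t := by
  unfold p3 U
  refine Measurable.const_mul ?_ _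
  refine (StronglyMeasurable.integral_prod_right' (ν := volume.restrict (Set.Ici (2 * L - x₀)))
    (f := fun z : ℝ × ℝ => Real.exp ((α / β) * (z.2 - (2 * L - x₀))) *
      ((1 / √(4 * π * D * t)) * Real.exp (-(z.1 - z.2 - ν * t) ^ 2 / (4 * D * t)))) ?_).measurable
  exact Measurable.stronglyMeasurable (by fun_prop)

lemma abs_p3_le {D ν L x₀ α β x t : ℝ} (hD : 0 < D) (hd : 0 < L - x₀) (ht : 0 < t)
    (hνt : |ν * t| ≤ (L - x₀) / 2) (hkt : (|α / β| + 1) * (4 * D * t) ≤ L - x₀) (hx : x ≤ L) :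
    |p3 D ν L x₀ α β x t| ≤
      |2 * (α / β + ν / (2 * D)) * Real.exp ((ν / D) * (L - x₀))| *
        smallBound D (L - x₀) t * Real.exp (-(L - x)) := by
  unfold p3
  rw [abs_mul, mul_assoc |_|]
  gcongr
  have h := norm_integral_le_of_norm_le (μ := volume.restrict (Set.Ici (2 * L - x₀)))
    (f := fun η => Real.exp ((α / β) * (η - (2 * L - x₀))) * U D ν x t η)
    ((integrableOn_exp_neg_sub_Ici (2 * L - x₀)).const_mul
      (smallBound D (L - x₀) t * Real.exp (-(L - x)))) (by
      filter_upwards [ae_restrict_mem measurableSet_Ici] with η hη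
      rw [Real.norm_of_nonneg (mul_nonneg (Real.exp_pos _).le (U_nonneg ..))]
      exact exp_mul_U_le hD hd ht hνt hkt hx hη)
  rwa [integral_const_mul, integral_exp_neg_sub_Ici, mul_one, Real.norm_eq_abs] at h

/-- The Robin-boundary solution satisfies the Dirac delta initial condition at `x₀`:
for every bounded continuous `f : ℝ → ℝ`, `∫_{−∞}^{L} f(x) p(x, t) dx → f(x₀)` as `t → 0⁺`. -/
theorem pRobin_delta_initial_condition (D ν L x₀ α β : ℝ) (hD : 0 < D) (hx₀ : x₀ < L)
    (hβ : β ≠ 0) (f : ℝ → ℝ) (hf : Continuous f) (hbdd : ∃ M : ℝ, ∀ x : ℝ, |f x| ≤ M) :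
    Tendsto (fun t : ℝ => ∫ x in Set.Iic L, f x * pRobin D ν L x₀ α β x t)
      (𝓝[>] 0) (𝓝 (f x₀)) := by
  obtain ⟨M, hM⟩ := hbdd
  have hM0 : 0 ≤ M := (abs_nonneg _).trans (hM 0)
  have hd : 0 < L - x₀ := sub_pos.2 hx₀
  have hgm : Measurable ((Set.Iic L).indicator f) := hf.measurable.indicator measurableSet_Iic
  have hgM : ∀ x, |(Set.Iic L).indicator f x| ≤ M := fun x => by
    by_cases hx : x ∈ Set.Iic L
    · rw [Set.indicator_of_mem hx]; exact hM x
    · rw [Set.indicator_of_notMem hx, abs_zero]; exact hM0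
  have hind : ∀ a t : ℝ, ∫ x, (Set.Iic L).indicator f x * U D ν x t a =
      ∫ x in Set.Iic L, f x * U D ν x t a := fun a t => by
    rw [← integral_indicator measurableSet_Iic]
    congr 1
    ext x
    exact (Set.indicator_mul_left (Set.Iic L) f fun x => U D ν x t a).symm
  have hlim : ∀ a, a ≠ L → Tendsto (fun t => ∫ x in Set.Iic L, f x * U D ν x t a) (𝓝[>] 0)
      (𝓝 ((Set.Iic L).indicator f a)) := fun a ha => by
    simp only [← hind]
    refine tendsto_integral_mul_U hD ν a hgm hgM ?_
    rcases lt_or_gt_of_ne ha with h | h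
    · refine hf.continuousAt.congr ?_
      filter_upwards [Iio_mem_nhds h] with x hx
      exact (Set.indicator_of_mem (Set.mem_Iic.2 (le_of_lt hx)) f).symm
    · refine (continuousAt_const (y := (0 : ℝ))).congr ?_
      filter_upwards [Ioi_mem_nhds h] with x hx
      exact (Set.indicator_of_notMem (by simpa using hx) f).symm
  have h1 := hlim x₀ hx₀.ne
  rw [Set.indicator_of_mem (Set.mem_Iic.2 hx₀.le)] at h1
  have h2 := (hlim (2 * L - x₀) (by intro h; linarith)).const_mul (Real.exp ((ν / D) * (L - x₀)))
  rw [Set.indicator_of_notMem (by rw [Set.mem_Iic]; linarith), mul_zero] at h2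
  have hsmall : ∀ᶠ t : ℝ in 𝓝[>] 0, 0 < t ∧ |ν * t| ≤ (L - x₀) / 2 ∧
      (|α / β| + 1) * (4 * D * t) ≤ L - x₀ := by
    have c1 : Continuous fun t : ℝ => |ν * t| := by fun_prop
    have c2 : Continuous fun t : ℝ => (|α / β| + 1) * (4 * D * t) := by fun_prop
    have e1 := (c1.tendsto 0).eventually_le_const (u := (L - x₀) / 2) (by simpa using hx₀)
    have e2 := (c2.tendsto 0).eventually_le_const (u := L - x₀) (by simpa using hx₀)
    filter_upwards [self_mem_nhdsWithin, nhdsWithin_le_nhds e1, nhdsWithin_le_nhds e2]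
      with t ht h1 h2
    exact ⟨ht, h1, h2⟩
  obtain ⟨K, hK⟩ : ∃ K, K = |2 * (α / β + ν / (2 * D)) * Real.exp ((ν / D) * (L - x₀))| :=
    ⟨_, rfl⟩
  have hdom : ∀ t : ℝ, 0 < t → |ν * t| ≤ (L - x₀) / 2 → (|α / β| + 1) * (4 * D * t) ≤ L - x₀ →
      ∀ᵐ x ∂volume.restrict (Set.Iic L), ‖f x * p3 D ν L x₀ α β x t‖ ≤
        M * (K * smallBound D (L - x₀) t) * Real.exp (-(L - x)) := fun t ht ha hb => by
    filter_upwards [ae_restrict_mem measurableSet_Iic] with x hx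
    rw [norm_mul, mul_assoc, hK]
    exact mul_le_mul (hM x) (abs_p3_le hD hd ht ha hb hx) (norm_nonneg _) hM0
  have h3 : Tendsto (fun t => ∫ x in Set.Iic L, f x * p3 D ν L x₀ α β x t) (𝓝[>] 0) (𝓝 0) := by
    have hb := ((tendsto_smallBound hD hd).const_mul K).const_mul M
    rw [mul_zero, mul_zero] at hb
    refine squeeze_zero_norm' ?_ hb
    filter_upwards [hsmall] with t ⟨ht, ha, hb⟩
    have h := norm_integral_le_of_norm_le ((integrableOn_exp_neg_sub_Iic L).const_mul _)
      (hdom t ht ha hb)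
    rwa [integral_const_mul, integral_exp_neg_sub_Iic, mul_one] at h
  have hsum := (h1.add h2).add h3
  rw [add_zero, add_zero] at hsum
  refine hsum.congr' ?_
  filter_upwards [hsmall] with t ⟨ht, ha, hb⟩
  have hU : ∀ a, IntegrableOn (fun x => f x * U D ν x t a) (Set.Iic L) := fun a =>
    ((integrable_U hD ν a ht).bdd_mul (c := M) hf.aestronglyMeasurable
      (Eventually.of_forall hM)).integrableOn
  have hI3 : IntegrableOn (fun x => f x * p3 D ν L x₀ α β x t) (Set.Iic L) :=
    Integrable.mono' ((integrableOn_exp_neg_sub_Iic L).const_mul _)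
      (hf.measurable.mul (measurable_p3 ..)).aestronglyMeasurable (hdom t ht ha hb)
  have hI2 := (hU (2 * L - x₀)).const_mul (Real.exp ((ν / D) * (L - x₀)))
  have hI12 : IntegrableOn (fun x => f x * U D ν x t x₀ +
      Real.exp ((ν / D) * (L - x₀)) * (f x * U D ν x t (2 * L - x₀))) (Set.Iic L) :=
    (hU x₀).add hI2
  rw [← integral_const_mul, ← integral_add (hU x₀) hI2, ← integral_add hI12 hI3]
  congr 1
  ext x
  simp only [pRobin, p1, p2]
  ring
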